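/- Let n ≥ 2 and let ℓ₁,…,ℓ_n : ℂ³ → ℂ be nonzero linear forms that are pairwise non-proportional, and set f = ∏_{i=1}^n ℓᵢ ∈ ℂ[x₀,x₁,x₂]. Consider F = yⁿ + zⁿ − f(x₀,x₁,x₂) ∈ ℂ[y,z,x₀,x₁,x₂]. Then the set of points w ∈ ℂ⁵ at which all five partial derivatives of F vanish is exactly {(0,0,v) : v ∈ ℂ³ and at least two of the linear forms ℓ₁,…,ℓ_n vanish at v}. In particular, the singular locus of the projective threefold {F = 0} ⊂ ℙ⁴ consists of the points (0:0:a:b:c) such that (a:b:c) is a point of multiplicity at least two of the line arrangement defined by f. -/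

import Mathlib

/-!
Where a factor `p` of `p * q` vanishes, the Leibniz rule leaves `q ∇p` as the gradient of the
product. As a nonzero linear form has constant nonzero gradient, `∏ ℓᵢ` is critical at a zero of
`ℓᵢ` exactly when a second form `ℓⱼ` vanishes there; and every critical point of `∏ ℓᵢ` lies on
some `ℓᵢ = 0` by Euler's identity. Adding the `n`-th power of a new variable to a polynomial
leaves the critical locus unchanged, placed in the hyperplane where that variable is zero.
-/

open MvPolynomial

section CriticalPoints

variable {σ R : Type*} [CommRing R]

/-- A point at which all partial derivatives of `f` vanish. The value `eval v f` is not constrained: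
in positive characteristic a critical point need not lie on `f = 0`, even for homogeneous `f`. -/
def IsCriticalPoint (f : MvPolynomial σ R) (v : σ → R) : Prop :=
  ∀ k, eval v (pderiv k f) = 0

theorem isCriticalPoint_neg_iff {f : MvPolynomial σ R} {v : σ → R} :
    IsCriticalPoint (-f) v ↔ IsCriticalPoint f v := by
  simp only [IsCriticalPoint, map_neg, neg_eq_zero]

theorem IsCriticalPoint.eval_eq_zero_of_isHomogeneous [NoZeroDivisors R] [Finite σ]
    {f : MvPolynomial σ R} {v : σ → R} {n : ℕ} (hv : IsCriticalPoint f v)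
    (hf : f.IsHomogeneous n) (hn : (n : R) ≠ 0) : eval v f = 0 := by
  cases nonempty_fintype σ
  have euler : ∑ k, v k * eval v (pderiv k f) = n * eval v f := by
    simpa using congrArg (eval v) hf.sum_X_mul_pderiv
  simpa only [hv _, mul_zero, Finset.sum_const_zero, zero_eq_mul, hn, false_or] using euler

theorem eval_pderiv_mul_of_eval_eq_zero {p : MvPolynomial σ R} {v : σ → R} (hp : eval v p = 0)
    (q : MvPolynomial σ R) (k : σ) :
    eval v (pderiv k (p * q)) = eval v (pderiv k p) * eval v q := by
  rw [pderiv_mul, map_add, map_mul, map_mul, hp, zero_mul, add_zero]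

theorem isCriticalPoint_mul_iff_of_eval_eq_zero [NoZeroDivisors R] {p q : MvPolynomial σ R}
    {v : σ → R} (hp : eval v p = 0) :
    IsCriticalPoint (p * q) v ↔ IsCriticalPoint p v ∨ eval v q = 0 := by
  simp only [IsCriticalPoint, eval_pderiv_mul_of_eval_eq_zero hp, mul_eq_zero, forall_or_right]

theorem isCriticalPoint_prod_iff [IsDomain R] {ι : Type*} [Fintype ι]
    {p : ι → MvPolynomial σ R} {v : σ → R} (hp : ∀ i, ¬ IsCriticalPoint (p i) v)
    (hv : eval v (∏ i, p i) = 0) :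
    IsCriticalPoint (∏ i, p i) v ↔ ∃ i j, i ≠ j ∧ eval v (p i) = 0 ∧ eval v (p j) = 0 := by
  classical
  have critical_iff {i : ι} (hi : eval v (p i) = 0) :
      IsCriticalPoint (∏ i, p i) v ↔ ∃ j, i ≠ j ∧ eval v (p j) = 0 := by
    rw [← Finset.mul_prod_erase _ p (Finset.mem_univ i),
      isCriticalPoint_mul_iff_of_eval_eq_zero hi, or_iff_right (hp i), map_prod,
      Finset.prod_eq_zero_iff]
    simp only [Finset.mem_erase, Finset.mem_univ, and_true, ne_comm]
  constructor
  · intro hcrit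
    obtain ⟨i, -, hi⟩ := Finset.prod_eq_zero_iff.1 ((map_prod (eval v) p _).symm.trans hv)
    obtain ⟨j, hij, hj⟩ := (critical_iff hi).1 hcrit
    exact ⟨i, j, hij, hi, hj⟩
  · rintro ⟨i, j, hij, hi, hj⟩
    exact (critical_iff hi).2 ⟨j, hij, hj⟩

end CriticalPoints

section LinearForms

variable {σ R : Type*} [Fintype σ] [CommRing R]

/-- The linear form with coefficient vector `b`, as a polynomial: a factor of the product defining
a hyperplane arrangement. -/
noncomputable def linearForm (b : σ → R) : MvPolynomial σ R :=
  ∑ t, C (b t) * X t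

theorem eval_linearForm (b v : σ → R) : eval v (linearForm b) = ∑ t, b t * v t := by
  simp only [linearForm, map_sum, map_mul, eval_C, eval_X]

theorem pderiv_linearForm (b : σ → R) (k : σ) : pderiv k (linearForm b) = C (b k) := by
  classical
  simp [linearForm, Pi.single_apply]

theorem isHomogeneous_linearForm (b : σ → R) : (linearForm b).IsHomogeneous 1 :=
  IsHomogeneous.sum _ _ _ fun t _ => isHomogeneous_C_mul_X (b t) t

theorem isHomogeneous_prod_linearForm {ι : Type*} [Fintype ι] (a : ι → σ → R) :
    (∏ i, linearForm (a i)).IsHomogeneous (Fintype.card ι) := by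
  simpa using IsHomogeneous.prod Finset.univ _ _ fun i _ => isHomogeneous_linearForm (a i)

theorem isCriticalPoint_linearForm_iff {b v : σ → R} :
    IsCriticalPoint (linearForm b) v ↔ b = 0 := by
  simp only [IsCriticalPoint, pderiv_linearForm, eval_C, funext_iff, Pi.zero_apply]

theorem isCriticalPoint_prod_linearForm_iff [IsDomain R] {ι : Type*} [Fintype ι]
    (hι : (Fintype.card ι : R) ≠ 0) {a : ι → σ → R} (ha : ∀ i, a i ≠ 0) {v : σ → R} :
    IsCriticalPoint (∏ i, linearForm (a i)) v ↔
      ∃ i j, i ≠ j ∧ ∑ t, a i t * v t = 0 ∧ ∑ t, a j t * v t = 0 := by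
  have smooth (i : ι) : ¬ IsCriticalPoint (linearForm (a i)) v :=
    isCriticalPoint_linearForm_iff.not.2 (ha i)
  simp only [← eval_linearForm]
  constructor
  · intro hcrit
    exact (isCriticalPoint_prod_iff smooth
      (hcrit.eval_eq_zero_of_isHomogeneous (isHomogeneous_prod_linearForm a) hι)).1 hcrit
  · rintro ⟨i, j, hij, hi, hj⟩
    have hv : eval v (∏ i, linearForm (a i)) = 0 := by
      rw [map_prod, Finset.prod_eq_zero (Finset.mem_univ i) hi]
    exact (isCriticalPoint_prod_iff smooth hv).2 ⟨i, j, hij, hi, hj⟩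

end LinearForms

section AddingVariables

variable {R : Type*} [CommRing R] {m : ℕ}

theorem pderiv_zero_rename_succ (f : MvPolynomial (Fin m) R) :
    pderiv 0 (rename Fin.succ f) = 0 := by
  refine pderiv_eq_zero_of_notMem_vars fun h => ?_
  obtain ⟨k, -, hk⟩ := Finset.mem_image.1 (vars_rename Fin.succ f h)
  exact Fin.succ_ne_zero k hk

theorem isCriticalPoint_X_zero_pow_add_rename_succ_iff [NoZeroDivisors R] {n : ℕ} (hn : 2 ≤ n)
    (hnR : (n : R) ≠ 0) {f : MvPolynomial (Fin m) R} {w : Fin (m + 1) → R} :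
    IsCriticalPoint (X 0 ^ n + rename Fin.succ f) w ↔
      w 0 = 0 ∧ IsCriticalPoint f (w ∘ Fin.succ) := by
  have pderiv_zero : eval w (pderiv 0 (X 0 ^ n + rename Fin.succ f)) = n * w 0 ^ (n - 1) := by
    simp [pderiv_zero_rename_succ]
  have pderiv_succ (k : Fin m) : eval w (pderiv k.succ (X 0 ^ n + rename Fin.succ f)) =
      eval (w ∘ Fin.succ) (pderiv k f) := by
    rw [map_add, pderiv_pow, pderiv_X_of_ne (Fin.succ_ne_zero k).symm, mul_zero, zero_add,
      pderiv_rename (Fin.succ_injective m), eval_rename]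
  have deriv_eq_zero_iff : (n : R) * w 0 ^ (n - 1) = 0 ↔ w 0 = 0 := by
    rw [mul_eq_zero, or_iff_right hnR, pow_eq_zero_iff (by lia)]
  rw [IsCriticalPoint, Fin.forall_fin_succ, pderiv_zero, deriv_eq_zero_iff]
  simp only [pderiv_succ, IsCriticalPoint]

theorem X_pow_add_X_pow_sub_prod_eq_rename {ι : Type*} [Fintype ι] (n : ℕ) (a : ι → Fin m → R) :
    (X 0 ^ n + X 1 ^ n - ∏ i, ∑ t, C (a i t) * X t.succ.succ : MvPolynomial (Fin (m + 2)) R) =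
      X 0 ^ n + rename Fin.succ (X 0 ^ n + rename Fin.succ (-∏ i, linearForm (a i))) := by
  simp only [map_add, map_neg, map_pow, map_prod, map_sum, map_mul, linearForm, rename_C,
    rename_X, Fin.succ_zero_eq_one, sub_eq_add_neg, add_assoc]

end AddingVariables

theorem statement8_general {R : Type*} [CommRing R] [IsDomain R] {m n : ℕ} (hn : 2 ≤ n)
    (hnR : (n : R) ≠ 0) {a : Fin n → Fin m → R} (ha : ∀ i, a i ≠ 0) :
    {w : Fin (m + 2) → R | ∀ k, eval w (pderiv k
        (X 0 ^ n + X 1 ^ n - ∏ i, ∑ t, C (a i t) * X t.succ.succ)) = 0} =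
      {w | w 0 = 0 ∧ w 1 = 0 ∧ ∃ i j, i ≠ j ∧
        ∑ t, a i t * w t.succ.succ = 0 ∧ ∑ t, a j t * w t.succ.succ = 0} := by
  ext w
  change IsCriticalPoint _ w ↔ _
  rw [X_pow_add_X_pow_sub_prod_eq_rename, isCriticalPoint_X_zero_pow_add_rename_succ_iff hn hnR,
    isCriticalPoint_X_zero_pow_add_rename_succ_iff hn hnR, isCriticalPoint_neg_iff,
    isCriticalPoint_prod_linearForm_iff (by rwa [Fintype.card_fin]) ha]
  rfl

theorem statement8 (n : ℕ) (hn : 2 ≤ n)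
    -- the linear form `ℓᵢ` on `ℂ³` is `v ↦ ∑ t, a i t * v t`
    (a : Fin n → Fin 3 → ℂ) (ha : ∀ i, a i ≠ 0)
    (hprop : ∀ i j, i ≠ j → ∀ c : ℂ, a j ≠ c • a i)
    (F : MvPolynomial (Fin 5) ℂ)
    -- variables: `X 0 = y`, `X 1 = z`, `X 2 = x₀`, `X 3 = x₁`, `X 4 = x₂`
    (hF : F = X 0 ^ n + X 1 ^ n
        - ∏ i, (∑ t : Fin 3, C (a i t) * X (t.succ.succ : Fin 5))) :
    {w : Fin 5 → ℂ | ∀ i : Fin 5, eval w (pderiv i F) = 0}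
      = {w : Fin 5 → ℂ | w 0 = 0 ∧ w 1 = 0 ∧
          ∃ i j : Fin n, i ≠ j ∧ (∑ t : Fin 3, a i t * w (t.succ.succ : Fin 5)) = 0 ∧
            (∑ t : Fin 3, a j t * w (t.succ.succ : Fin 5)) = 0} := by
  subst hF
  exact statement8_general hn (Nat.cast_ne_zero.2 (by lia)) ha
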